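/- For s ∈ (3/2, 2), every γ ∈ 𝓜 and every u ∈ H^s(𝕋, ℝⁿ) satisfy ‖R^s_γ u‖²_{L²(ν_γ)} ≤ (1/s) · distor(γ)^{2s} · ( [u]²_{H^s(γ)} + ‖D_γ u‖²_{L∞} · [γ]²_{H^s(γ)} ). In particular R^s_γ is a bounded linear operator from H^s(𝕋,ℝⁿ) to L²(ν_γ). -/

import Mathlib

open MeasureTheory Real Filter Set
open scoped ENNReal Topology RealInnerProductSpace

noncomputable section

/-- Euclidean space `ℝⁿ`. -/
abbrev En (n : ℕ) : Type := EuclideanSpace ℝ (Fin n)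

/-- A fundamental domain for the circle `𝕋 = ℝ/ℤ`. -/
def I01 : Set ℝ := Set.Ico (0 : ℝ) 1

/-- The intrinsic distance on `𝕋 = ℝ/ℤ`, expressed for real representatives. -/
def dT (x y : ℝ) : ℝ := ⨅ k : ℤ, |x - y - (k : ℝ)|

/-- Supremum norm of a (periodic) function on the circle. -/
def supNorm {E : Type*} [NormedAddCommGroup E] (f : ℝ → E) : ℝ := ⨆ x : ℝ, ‖f x‖

/-- The squared Gagliardo seminorm `[v]_{H^σ}²` of a function on the circle, valued in `[0,∞]`. -/
def gagliardoSqE {E : Type*} [NormedAddCommGroup E] (σ : ℝ) (v : ℝ → E) : ℝ≥0∞ :=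
  ∫⁻ x in I01, ∫⁻ y in I01, ENNReal.ofReal (‖v y - v x‖ ^ 2 / dT x y ^ (2 * σ + 1))

/-- Membership in the Sobolev–Slobodeckij space `H^s(𝕋, ℝⁿ)`; for `s ∈ (3/2,2)` such
functions have a `C¹` representative, which we take as the defining data. -/
def InHs {n : ℕ} (s : ℝ) (u : ℝ → En n) : Prop :=
  Function.Periodic u 1 ∧ ContDiff ℝ 1 u ∧ gagliardoSqE (s - 1) (deriv u) < ⊤

/-- The squared `H^s` norm `‖u‖²_{L²} + ‖u'‖²_{L²} + [u']²_{H^{s-1}}`. -/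
def HsNormSq {n : ℕ} (s : ℝ) (u : ℝ → En n) : ℝ :=
  (∫ x in I01, ‖u x‖ ^ 2) + (∫ x in I01, ‖deriv u x‖ ^ 2) +
    (gagliardoSqE (s - 1) (deriv u)).toReal

/-- The `H^s` norm. -/
def HsNorm {n : ℕ} (s : ℝ) (u : ℝ → En n) : ℝ := Real.sqrt (HsNormSq s u)

/-- The `H^s` inner product. -/
def HsInner {n : ℕ} (s : ℝ) (u v : ℝ → En n) : ℝ :=
  (∫ x in I01, ⟪u x, v x⟫) + (∫ x in I01, ⟪deriv u x, deriv v x⟫) +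
    ∫ x in I01, ∫ y in I01,
      ⟪deriv u y - deriv u x, deriv v y - deriv v x⟫ / dT x y ^ (2 * (s - 1) + 1)

/-- The manifold `𝓜` of embedded closed curves of class `H^s`: injective (on the circle)
immersions. -/
def InM {n : ℕ} (s : ℝ) (γ : ℝ → En n) : Prop :=
  InHs s γ ∧ Set.InjOn γ I01 ∧ ∀ x, deriv γ x ≠ 0

/-- The length `L(γ)`. -/
def arcLen {n : ℕ} (γ : ℝ → En n) : ℝ := ∫ x in I01, ‖deriv γ x‖

/-- The arc-length distance `d_γ(x,y)`: the length of the shorter of the two arcs of `γ`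
between `x` and `y`. -/
def arcDist {n : ℕ} (γ : ℝ → En n) (x y : ℝ) : ℝ :=
  ⨅ k : ℤ, |∫ t in x..(y + (k : ℝ)), ‖deriv γ t‖|

/-- Derivative with respect to arc length, `D_γ u = u' / |γ'|`. -/
def Dg {n : ℕ} (γ u : ℝ → En n) (x : ℝ) : En n := ‖deriv γ x‖⁻¹ • deriv u x

/-- `𝒟_γ u (x)`, the pointwise linear map `w ↦ |γ'(x)|⁻² ⟪γ'(x), w⟫ u'(x)`. -/
def DDg {n : ℕ} (γ u : ℝ → En n) (x : ℝ) (w : En n) : En n :=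
  ((‖deriv γ x‖ ^ 2)⁻¹ * ⟪deriv γ x, w⟫) • deriv u x

/-- The operator `R^s_γ`. -/
def Rop {n : ℕ} (s : ℝ) (γ u : ℝ → En n) (x y : ℝ) : En n :=
  (‖γ y - γ x‖ ^ s)⁻¹ • (u y - u x - DDg γ u x (γ y - γ x))

/-- Density of the measure `μ_γ` with respect to `λ ⊗ λ` on `𝕋 × 𝕋`. -/
def muW {n : ℕ} (γ : ℝ → En n) (x y : ℝ) : ℝ :=
  ‖deriv γ x‖ * ‖deriv γ y‖ / ‖γ y - γ x‖

/-- Density of the measure `ν_γ` with respect to `λ ⊗ λ` on `𝕋 × 𝕋`. -/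
def nuW {n : ℕ} (γ : ℝ → En n) (x y : ℝ) : ℝ :=
  ‖deriv γ x‖ * ‖deriv γ y‖ / arcDist γ x y

/-- The tangent-point energy, valued in `[0,∞]`. -/
def EtpE {n : ℕ} (s : ℝ) (γ : ℝ → En n) : ℝ≥0∞ :=
  ∫⁻ x in I01, ∫⁻ y in I01, ENNReal.ofReal (‖Rop s γ γ x y‖ ^ 2 * muW γ x y)

/-- The tangent-point energy, real-valued (finite on `𝓜`). -/
def Etp {n : ℕ} (s : ℝ) (γ : ℝ → En n) : ℝ := (EtpE s γ).toReal

/-- `‖R^s_γ u‖²_{L²(ν_γ)}`, valued in `[0,∞]`. -/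
def RnuSqE {n : ℕ} (s : ℝ) (γ u : ℝ → En n) : ℝ≥0∞ :=
  ∫⁻ x in I01, ∫⁻ y in I01, ENNReal.ofReal (‖Rop s γ u x y‖ ^ 2 * nuW γ x y)

/-- `‖R^s_γ u‖²_{L²(ν_γ)}`, real-valued. -/
def RnuSq {n : ℕ} (s : ℝ) (γ u : ℝ → En n) : ℝ := (RnuSqE s γ u).toReal

/-- The squared `γ`-dependent seminorm `[u]²_{H^s(γ)}`, valued in `[0,∞]`. -/
def gagGammaSqE {n : ℕ} (s : ℝ) (γ u : ℝ → En n) : ℝ≥0∞ :=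
  ∫⁻ x in I01, ∫⁻ y in I01,
    ENNReal.ofReal (‖Dg γ u y - Dg γ u x‖ ^ 2 / arcDist γ x y ^ (2 * (s - 1)) * nuW γ x y)

/-- The squared `γ`-dependent seminorm `[u]²_{H^s(γ)}`, real-valued. -/
def gagGammaSq {n : ℕ} (s : ℝ) (γ u : ℝ → En n) : ℝ := (gagGammaSqE s γ u).toReal

/-- The inner product `⟨u,v⟩_{L²(γ)}`. -/
def innerL2g {n : ℕ} (γ u v : ℝ → En n) : ℝ := ∫ x in I01, ⟪u x, v x⟫ * ‖deriv γ x‖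

/-- The inner product `⟨u,v⟩_{H¹(γ)}`. -/
def innerH1g {n : ℕ} (γ u v : ℝ → En n) : ℝ :=
  ∫ x in I01, ⟪Dg γ u x, Dg γ v x⟫ * ‖deriv γ x‖

/-- The squared `γ`-dependent norm `‖u‖²_{H^s(γ)}`. -/
def HsGammaNormSq {n : ℕ} (s : ℝ) (γ u : ℝ → En n) : ℝ :=
  innerL2g γ u u + innerH1g γ u u + gagGammaSq s γ u

/-- The `γ`-dependent norm `‖u‖_{H^s(γ)}`. -/
def HsGammaNorm {n : ℕ} (s : ℝ) (γ u : ℝ → En n) : ℝ := Real.sqrt (HsGammaNormSq s γ u)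

/-- The bilinear form `B¹_γ`. -/
def B1 {n : ℕ} (s : ℝ) (γ u v : ℝ → En n) : ℝ :=
  ∫ x in I01, ∫ y in I01, ⟪Rop s γ u x y, Rop s γ v x y⟫ * muW γ x y

/-- The bilinear form `B²_γ`. -/
def B2 {n : ℕ} (s : ℝ) (γ u v : ℝ → En n) : ℝ :=
  ∫ x in I01, ∫ y in I01,
    ‖Rop s γ γ x y‖ ^ 2 * (⟪u y - u x, v y - v x⟫ / ‖γ y - γ x‖ ^ 2) * muW γ x y

/-- The bilinear form `B³_γ`. -/
def B3 {n : ℕ} (s : ℝ) (γ u v : ℝ → En n) : ℝ :=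
  ∫ x in I01, ∫ y in I01,
    ‖Rop s γ γ x y‖ ^ 2 * (⟪Dg γ u x, Dg γ v x⟫ + ⟪Dg γ u y, Dg γ v y⟫) * muW γ x y

/-- The Riemannian metric `G_γ(u,v)`. -/
def Gmet {n : ℕ} (s : ℝ) (γ u v : ℝ → En n) : ℝ :=
  2 * B1 s γ u v + (2 * s + 1) * B2 s γ u v + B3 s γ u v + innerH1g γ u v + innerL2g γ u v

/-- The distortion `distor(γ) = sup_{x ≠ y} d_γ(x,y)/|γ(y) − γ(x)|`, valued in `[0,∞]`. -/
def distorE {n : ℕ} (γ : ℝ → En n) : ℝ≥0∞ :=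
  ⨆ (x ∈ I01) (y ∈ I01) (_ : x ≠ y), ENNReal.ofReal (arcDist γ x y / ‖γ y - γ x‖)

/-- The distortion, real-valued. -/
def distor {n : ℕ} (γ : ℝ → En n) : ℝ := (distorE γ).toReal

/-- A `C¹` path `[0,1] → 𝓜 ⊂ H^s(𝕋,ℝⁿ)` (with respect to the `H^s` topology), recorded
together with its velocity field `V`. -/
structure C1Path (s : ℝ) (n : ℕ) where
  Γ : ℝ → ℝ → En n
  V : ℝ → ℝ → En n
  mem : ∀ t ∈ Set.Icc (0 : ℝ) 1, InM s (Γ t)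
  memV : ∀ t ∈ Set.Icc (0 : ℝ) 1, InHs s (V t)
  isDeriv : ∀ t ∈ Set.Icc (0 : ℝ) 1,
    Tendsto (fun h : ℝ => HsNorm s fun x => h⁻¹ • (Γ (t + h) x - Γ t x) - V t x)
      (𝓝[{h : ℝ | t + h ∈ Set.Icc (0 : ℝ) 1 ∧ h ≠ 0}] 0) (𝓝 0)
  contV : ∀ t ∈ Set.Icc (0 : ℝ) 1,
    Tendsto (fun τ : ℝ => HsNorm s fun x => V τ x - V t x) (𝓝[Set.Icc (0 : ℝ) 1] t) (𝓝 0)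

/-- Length of a path with respect to `G`. -/
def pathLen {s : ℝ} {n : ℕ} (P : C1Path s n) : ℝ :=
  ∫ t in (0 : ℝ)..1, Real.sqrt (Gmet s (P.Γ t) (P.V t) (P.V t))

/-- The path (Dirichlet) energy of a path with respect to `G`. -/
def pathEnergy {s : ℝ} {n : ℕ} (P : C1Path s n) : ℝ :=
  (1 / 2) * ∫ t in (0 : ℝ)..1, Gmet s (P.Γ t) (P.V t) (P.V t)

/-- The geodesic distance induced by `G`, valued in `[0,∞]` (`∞` if there is no path). -/
def geodDist (s : ℝ) {n : ℕ} (γ₀ γ₁ : ℝ → En n) : ℝ≥0∞ :=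
  ⨅ (P : C1Path s n) (_ : P.Γ 0 = γ₀ ∧ P.Γ 1 = γ₁), ENNReal.ofReal (pathLen P)

/-- `U ⊆ 𝓜` is bounded with respect to the geodesic distance `d_G`. -/
def GBounded (s : ℝ) {n : ℕ} (U : Set (ℝ → En n)) : Prop :=
  (∀ γ ∈ U, InM s γ) ∧
    ∃ γ₀, InM s γ₀ ∧ ∃ R : ℝ, ∀ γ ∈ U, geodDist s γ γ₀ ≤ ENNReal.ofReal R

/-- Weak convergence in the Hilbert space `H^s(𝕋,ℝⁿ)`. -/
def WeakHsTendsto {n : ℕ} (s : ℝ) (γk : ℕ → ℝ → En n) (γ : ℝ → En n) : Prop :=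
  ∀ v : ℝ → En n, InHs s v →
    Tendsto (fun k => HsInner s (γk k) v) atTop (𝓝 (HsInner s γ v))

/-- Directional derivative of `γ ↦ G_γ(u,v)` at `γ` in direction `w`. -/
def DGdir {n : ℕ} (s : ℝ) (γ w u v : ℝ → En n) : ℝ :=
  deriv (fun t : ℝ => Gmet s (fun x => γ x + t • w x) u v) 0

/-- `F'` is the derivative of the path `F` with respect to the `H^s` norm, on `S`. -/
def IsHsDerivOn {n : ℕ} (s : ℝ) (F F' : ℝ → ℝ → En n) (S : Set ℝ) : Prop :=
  ∀ t ∈ S,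
    Tendsto (fun h : ℝ => HsNorm s fun x => h⁻¹ • (F (t + h) x - F t x) - F' t x)
      (𝓝[{h : ℝ | t + h ∈ S ∧ h ≠ 0}] 0) (𝓝 0)

/-- The path `F` is continuous on `S` with respect to the `H^s` norm. -/
def HsContOn {n : ℕ} (s : ℝ) (F : ℝ → ℝ → En n) (S : Set ℝ) : Prop :=
  ∀ t ∈ S, Tendsto (fun τ : ℝ => HsNorm s fun x => F τ x - F t x) (𝓝[S] t) (𝓝 0)

/-- A solution of the geodesic initial value problem on `[0,∞)`, recorded as a triple
(position `Γ`, velocity `V`, acceleration `W`); the geodesic equation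
`Γ̈ + A_Γ(Γ̇)Γ̇ = 0` is expressed weakly via the Koszul formula for the
Christoffel operator `A`. -/
def GeodesicSol {n : ℕ} (s : ℝ) (γ₀ v₀ : ℝ → En n) (Γ V W : ℝ → ℝ → En n) : Prop :=
  (∀ t ∈ Set.Ici (0 : ℝ), InM s (Γ t) ∧ InHs s (V t) ∧ InHs s (W t)) ∧
  Γ 0 = γ₀ ∧ V 0 = v₀ ∧
  IsHsDerivOn s Γ V (Set.Ici 0) ∧ IsHsDerivOn s V W (Set.Ici 0) ∧
  HsContOn s V (Set.Ici 0) ∧ HsContOn s W (Set.Ici 0) ∧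
  ∀ t ∈ Set.Ici (0 : ℝ), ∀ w : ℝ → En n, InHs s w →
    Gmet s (Γ t) (W t) w + DGdir s (Γ t) (V t) (V t) w
      - (1 / 2) * DGdir s (Γ t) w (V t) (V t) = 0

lemma aux_fun (w : ℝ → ℝ) (hw : Continuous w) (hpos : ∀ t, 0 < w t) (p : ℝ) (hp : 1 < p)
    (x t m : ℝ) (hxt : x < t) (htm : t ≤ m) :
    ∫⁻ y in Icc t m, ENNReal.ofReal (w y / |∫ a in x..y, w a| ^ p) ≤
      ENNReal.ofReal (1 / (p - 1) * (1 / |∫ a in x..t, w a| ^ (p - 1))) := by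
  set r : ℝ → ℝ := fun y => ∫ a in x..y, w a with hr
  have hrpos : ∀ y, x < y → 0 < r y := fun y hy =>
    intervalIntegral.intervalIntegral_pos_of_pos (hw.intervalIntegrable _ _) hpos hy
  have hder : ∀ y, HasDerivAt r (w y) y := fun y => hw.integral_hasStrictDerivAt x y |>.hasDerivAt
  have hrc : Continuous r := continuous_iff_continuousAt.2 fun y => (hder y).continuousAt
  have hcont : ContinuousOn (fun y => w y / |r y| ^ p) (Icc t m) := by
    intro y hy
    have := hrpos y (hxt.trans_le hy.1)
    refine ContinuousAt.continuousWithinAt ?_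
    refine hw.continuousAt.div ?_ ?_
    · exact (hrc.abs.continuousAt).rpow_const (Or.inl (abs_pos.2 this.ne').ne')
    · exact (rpow_pos_of_pos (abs_pos.2 this.ne') _).ne'
  have hint : IntegrableOn (fun y => w y / |r y| ^ p) (Icc t m) := hcont.integrableOn_Icc
  rw [← ofReal_integral_eq_lintegral_ofReal hint
    (ae_of_all _ fun y => div_nonneg (hpos y).le (rpow_nonneg (abs_nonneg _) _))]
  apply ENNReal.ofReal_le_ofReal
  rw [integral_Icc_eq_integral_Ioc, ← intervalIntegral.integral_of_le htm]
  have hF : ∀ y ∈ uIcc t m, HasDerivAt (fun y => -(1 / (p-1)) * (r y) ^ (1 - p)) (w y / |r y| ^ p) y := by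
    intro y hy
    rw [uIcc_of_le htm] at hy
    have h0 := hrpos y (hxt.trans_le hy.1)
    have := ((hder y).rpow_const (p := 1 - p) (Or.inl h0.ne')).const_mul (-(1 / (p-1)))
    refine this.congr_deriv ?_
    rw [abs_of_pos h0, show 1 - p - 1 = -p by ring, rpow_neg h0.le]
    have : p - 1 ≠ 0 := by linarith
    field_simp
    ring
  rw [intervalIntegral.integral_eq_sub_of_hasDerivAt hF (hcont.intervalIntegrable_of_Icc htm)]
  have h1 := hrpos t hxt
  have h2 := hrpos m (hxt.trans_le htm)
  rw [abs_of_pos h1, one_div (r t ^ (p-1)), ← rpow_neg h1.le, neg_sub]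
  have : 0 ≤ 1 / (p-1) * r m ^ (1-p) := mul_nonneg (by apply one_div_nonneg.2; linarith) (rpow_nonneg h2.le _)
  linarith

lemma hardy_right (w F : ℝ → ℝ) (hw : Continuous w) (hpos : ∀ t, 0 < w t) (hF : Continuous F)
    (hF0 : ∀ t, 0 ≤ F t) (p : ℝ) (hp : 1 < p) (x m : ℝ) :
    ∫⁻ y in Ioc x m, ENNReal.ofReal (w y * |∫ t in x..y, w t * F t| / |∫ t in x..y, w t| ^ p) ≤
      ENNReal.ofReal (1 / (p - 1)) *
       ∫⁻ t in Ioc x m, ENNReal.ofReal (w t * F t / |∫ a in x..t, w a| ^ (p - 1)) := by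
  have hrc : Continuous (fun y => ∫ a in x..y, w a) :=
    continuous_iff_continuousAt.2 fun y =>
      (hw.integral_hasStrictDerivAt x y |>.hasDerivAt).continuousAt
  set k : ℝ → ℝ≥0∞ := fun y => ENNReal.ofReal (w y / |∫ t in x..y, w t| ^ p) with hk
  set f : ℝ → ℝ≥0∞ := fun t => ENNReal.ofReal (w t * F t) with hf
  have hkm : Measurable k := by
    apply Measurable.ennreal_ofReal
    exact hw.measurable.div (hrc.abs.measurable.pow_const p)
  have hfm : Measurable f := (hw.mul hF).measurable.ennreal_ofReal
  have hwF0 : ∀ t, 0 ≤ w t * F t := fun t => mul_nonneg (hpos t).le (hF0 t)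
  have e1 : ∀ y ∈ Ioc x m, ENNReal.ofReal (w y * |∫ t in x..y, w t * F t| / |∫ t in x..y, w t| ^ p)
      = ∫⁻ t in Ioc x m, (Ici t).indicator k y * f t := by
    intro y hy
    have : w y * |∫ t in x..y, w t * F t| / |∫ t in x..y, w t| ^ p =
      (w y / |∫ t in x..y, w t| ^ p) * |∫ t in x..y, w t * F t| := by ring
    rw [this, ENNReal.ofReal_mul (div_nonneg (hpos y).le (rpow_nonneg (abs_nonneg _) _)),
      intervalIntegral.integral_of_le (f := fun t => w t * F t) hy.1.le,
      abs_of_nonneg (a := ∫ t in Ioc x y, w t * F t) (integral_nonneg fun t => hwF0 t),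
      ofReal_integral_eq_lintegral_ofReal (f := fun t => w t * F t) ((hw.mul hF).integrableOn_Ioc) (ae_of_all _ hwF0),
      ← lintegral_const_mul' _ _ ENNReal.ofReal_ne_top]
    have : ∀ t, (Ici t).indicator k y * f t = (Iic y).indicator (fun t => k y * f t) t := by
      intro t
      by_cases h : t ≤ y <;> simp [indicator, h]
    simp_rw [this]
    rw [setLIntegral_indicator measurableSet_Iic]
    congr 2
    rw [Set.inter_comm, Set.Ioc_inter_Iic, min_eq_right hy.2]
  rw [setLIntegral_congr_fun measurableSet_Ioc e1, lintegral_lintegral_swap,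
    ← lintegral_const_mul' _ _ ENNReal.ofReal_ne_top]
  · apply setLIntegral_mono' measurableSet_Ioc
    intro t ht
    rw [lintegral_mul_const _ (hkm.indicator measurableSet_Ici),
      setLIntegral_indicator measurableSet_Ici]
    have : Ici t ∩ Ioc x m = Icc t m := by
      ext z; simp only [mem_inter_iff, mem_Ici, mem_Ioc, mem_Icc]
      constructor
      · rintro ⟨a, b, c⟩; exact ⟨a, c⟩
      · rintro ⟨a, c⟩; exact ⟨a, ht.1.trans_le a, c⟩
    rw [this]
    refine (mul_le_mul_left (aux_fun w hw hpos p hp x t m ht.1 ht.2) _).trans ?_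
    rw [hf, ← ENNReal.ofReal_mul, ← ENNReal.ofReal_mul]
    · apply ENNReal.ofReal_le_ofReal
      apply le_of_eq; ring
    · apply one_div_nonneg.2; linarith
    · apply mul_nonneg
      · apply one_div_nonneg.2; linarith
      · positivity
  · apply Measurable.aemeasurable
    have : (Function.uncurry fun y t => (Ici t).indicator k y * f t) =
      fun z : ℝ × ℝ => ({z : ℝ × ℝ | z.2 ≤ z.1}.indicator (fun z => k z.1) z) * f z.2 := by
      ext z
      by_cases h : z.2 ≤ z.1 <;> simp [indicator, h, Function.uncurry]
    rw [this]
    exact ((hkm.comp measurable_fst).indicator (measurableSet_le measurable_snd measurable_fst)).mul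
      (hfm.comp measurable_snd)

lemma hardy_left (w F : ℝ → ℝ) (hw : Continuous w) (hpos : ∀ t, 0 < w t) (hF : Continuous F)
    (hF0 : ∀ t, 0 ≤ F t) (p : ℝ) (hp : 1 < p) (x m : ℝ) :
    ∫⁻ y in Ioc m x, ENNReal.ofReal (w y * |∫ t in x..y, w t * F t| / |∫ t in x..y, w t| ^ p) ≤
      ENNReal.ofReal (1 / (p - 1)) *
       ∫⁻ t in Ioc m x, ENNReal.ofReal (w t * F t / |∫ a in x..t, w a| ^ (p - 1)) := by
  have key := hardy_right (fun t => w (-t)) (fun t => F (-t)) (by fun_prop) (fun t => hpos _)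
    (by fun_prop) (fun t => hF0 _) p hp (-x) (-m)
  have e : ∀ g : ℝ → ℝ≥0∞, ∫⁻ y in Ioc m x, g y = ∫⁻ y in Ioc (-x) (-m), g (-y) := by
    intro g
    rw [setLIntegral_congr (Ioo_ae_eq_Ioc (μ := volume)).symm,
      setLIntegral_congr (Ioo_ae_eq_Ioc (a := -x) (μ := volume)).symm]
    have := (Measure.measurePreserving_neg (volume : Measure ℝ)).setLIntegral_comp_preimage_emb
      (MeasurableEquiv.neg ℝ).measurableEmbedding g (Ioo m x)
    rw [← this]
    simp
  rw [e, e]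
  have e2 : ∀ g : ℝ → ℝ, ∀ y, |∫ t in (-x)..y, g (-t)| = |∫ t in x..(-y), g t| := by
    intro g y
    rw [intervalIntegral.integral_comp_neg, intervalIntegral.integral_symm, abs_neg, neg_neg]
  simp_rw [e2 w, e2 (fun t => w t * F t)] at key
  exact key

lemma cs_aux {E : Type*} [NormedAddCommGroup E] [NormedSpace ℝ E] (w : ℝ → ℝ) (f : ℝ → E)
    (hw : Continuous w) (hpos : ∀ t, 0 < w t) (hf : Continuous f) (x y : ℝ) (hxy : x < y) :
    ‖∫ t in x..y, w t • f t‖ ^ 2 ≤ (∫ t in x..y, w t) * (∫ t in x..y, w t * ‖f t‖ ^ 2) := by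
  have hA : 0 < ∫ t in x..y, w t :=
    intervalIntegral.intervalIntegral_pos_of_pos (hw.intervalIntegrable _ _) hpos hxy
  set A := ∫ t in x..y, w t
  set B := ∫ t in x..y, w t * ‖f t‖
  set C := ∫ t in x..y, w t * ‖f t‖ ^ 2
  have h1 : ‖∫ t in x..y, w t • f t‖ ≤ B := by
    refine (intervalIntegral.norm_integral_le_integral_norm hxy.le).trans (le_of_eq ?_)
    apply intervalIntegral.integral_congr
    intro t _
    simp [norm_smul, abs_of_pos (hpos t)]
  have h2 : 0 ≤ ∫ t in x..y, w t * (‖f t‖ - B / A) ^ 2 :=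
    intervalIntegral.integral_nonneg hxy.le fun t _ => mul_nonneg (hpos t).le (sq_nonneg _)
  have h3 : ∫ t in x..y, w t * (‖f t‖ - B / A) ^ 2 = C - 2 * (B / A) * B + (B / A) ^ 2 * A := by
    have : ∀ t, w t * (‖f t‖ - B / A) ^ 2 =
      w t * ‖f t‖ ^ 2 - 2 * (B / A) * (w t * ‖f t‖) + (B / A) ^ 2 * w t := fun t => by ring
    simp_rw [this]
    rw [intervalIntegral.integral_add, intervalIntegral.integral_sub,
      intervalIntegral.integral_const_mul, intervalIntegral.integral_const_mul]
    all_goals exact Continuous.intervalIntegrable (by fun_prop) _ _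
  have h4 : C - 2 * (B / A) * B + (B / A) ^ 2 * A = C - B ^ 2 / A := by field_simp; ring
  rw [h3, h4, sub_nonneg, div_le_iff₀ hA] at h2
  nlinarith [norm_nonneg (∫ t in x..y, w t • f t)]

lemma cs_abs {E : Type*} [NormedAddCommGroup E] [NormedSpace ℝ E] (w : ℝ → ℝ) (f : ℝ → E)
    (hw : Continuous w) (hpos : ∀ t, 0 < w t) (hf : Continuous f) (x y : ℝ) :
    ‖∫ t in x..y, w t • f t‖ ^ 2 ≤ |∫ t in x..y, w t| * |∫ t in x..y, w t * ‖f t‖ ^ 2| := by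
  rcases lt_trichotomy x y with h | h | h
  · refine (cs_aux w f hw hpos hf x y h).trans ?_
    rw [← abs_mul]
    exact le_abs_self _
  · subst h; simp
  · rw [intervalIntegral.integral_symm, intervalIntegral.integral_symm y x,
      intervalIntegral.integral_symm y x, norm_neg, abs_neg, abs_neg]
    refine (cs_aux w f hw hpos hf y x h).trans ?_
    rw [← abs_mul]
    exact le_abs_self _

lemma dT_eq (x y : ℝ) : dT x y = |x - y - round (x - y)| := by
  apply le_antisymm
  · exact ciInf_le ⟨0, by rintro _ ⟨k, rfl⟩; exact abs_nonneg _⟩ (round (x - y))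
  · exact le_ciInf fun k => round_le _ _

lemma dT_nonneg (x y : ℝ) : 0 ≤ dT x y := by rw [dT_eq]; exact abs_nonneg _

lemma dT_le (x y : ℝ) (k : ℤ) : dT x y ≤ |x - y - k| := by rw [dT_eq]; exact round_le _ _

lemma dT_pos {x y : ℝ} (hx : x ∈ I01) (hy : y ∈ I01) (h : x ≠ y) : 0 < dT x y := by
  rw [dT_eq, abs_pos]
  intro h0
  have h1 : x - y = (round (x - y) : ℝ) := by linarith
  have hx1 := hx.1; have hx2 := hx.2; have hy1 := hy.1; have hy2 := hy.2
  have h2 : (round (x - y) : ℝ) < (1 : ℤ) := by push_cast; linarith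
  have h3 : ((-1 : ℤ) : ℝ) < (round (x - y) : ℝ) := by push_cast; linarith
  have h4 := Int.cast_lt.1 h2
  have h5 := Int.cast_lt.1 h3
  have h6 : round (x - y) = 0 := by omega
  rw [h6] at h1
  apply h; push_cast at h1; linarith

lemma cv_aux (x c : ℝ) (hx : x ∈ I01) (hc : 0 < c) (hc1 : c ≤ 1) (g : ℝ → ℝ≥0∞) :
    ∫⁻ z in I01, g (x + c * (z - x)) ≤ ENNReal.ofReal c⁻¹ * ∫⁻ z in I01, g z := by
  have h := lintegral_image_eq_lintegral_abs_deriv_mul (s := I01)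
    (f := fun z => x + c * (z - x)) (f' := fun _ => c) measurableSet_Ico
    (fun z _ => by
      have := (((hasDerivAt_id z).sub_const x).const_mul c).const_add x
      simpa using this.hasDerivWithinAt)
    (fun a _ b _ hab => by
      have : c * (a - b) = 0 := by simp only at hab; linarith
      rcases mul_eq_zero.1 this with h | h <;> linarith) g
  rw [lintegral_const_mul' _ _ ENNReal.ofReal_ne_top, abs_of_pos hc] at h
  have h2 : ∫⁻ z in I01, g (x + c * (z - x)) =
      ENNReal.ofReal c⁻¹ * (ENNReal.ofReal c * ∫⁻ z in I01, g (x + c * (z - x))) := by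
    rw [← mul_assoc, ← ENNReal.ofReal_mul (inv_nonneg.2 hc.le), inv_mul_cancel₀ hc.ne']
    simp
  rw [h2, ← h]
  gcongr
  rintro _ ⟨z, hz, rfl⟩
  obtain ⟨hz1, hz2⟩ := hz
  obtain ⟨hx1, hx2⟩ := hx
  constructor
  · nlinarith
  · nlinarith

lemma int_I01 {E : Type*} [NormedAddCommGroup E] [NormedSpace ℝ E] (f : ℝ → E) :
    ∫ x in I01, f x = ∫ x in (0:ℝ)..1, f x := by
  rw [intervalIntegral.integral_of_le zero_le_one, I01, integral_Ico_eq_integral_Ioc]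

lemma morrey_step {n : ℕ} (σ : ℝ) (hσ : 1 / 2 < σ) (v : ℝ → En n) (hv : Continuous v)
    (hG : gagliardoSqE σ v < ⊤) (x : ℝ) (hx : x ∈ I01) (δ : ℝ) (hδ : 0 < δ) (hδ1 : δ ≤ 1) :
    ‖(∫ z in (0:ℝ)..1, v (x + δ * (z - x))) - ∫ z in (0:ℝ)..1, v (x + δ / 2 * (z - x))‖ ^ 2 ≤
      2 * δ ^ (2 * σ - 1) * (gagliardoSqE σ v).toReal := by
  have hx1 := hx.1
  have hx2 := hx.2
  set K : ℝ → ℝ → ℝ := fun z y => ‖v (x + δ * (y - x)) - v (x + δ / 2 * (z - x))‖ ^ 2 with hK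
  have hKc : Continuous (Function.uncurry K) := by
    simp only [hK, Function.uncurry_def]; fun_prop
  have hKi : Continuous fun z => ∫ y in (0:ℝ)..1, K z y :=
    intervalIntegral.continuous_parametric_intervalIntegral_of_continuous' hKc 0 1
  have e1 : (∫ z in (0:ℝ)..1, v (x + δ * (z - x))) - ∫ z in (0:ℝ)..1, v (x + δ / 2 * (z - x)) =
      ∫ z in (0:ℝ)..1, ∫ y in (0:ℝ)..1, (v (x + δ * (y - x)) - v (x + δ / 2 * (z - x))) := by
    have : ∀ z, ∫ y in (0:ℝ)..1, (v (x + δ * (y - x)) - v (x + δ / 2 * (z - x))) =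
        (∫ y in (0:ℝ)..1, v (x + δ * (y - x))) - v (x + δ / 2 * (z - x)) := by
      intro z
      rw [intervalIntegral.integral_sub (Continuous.intervalIntegrable (by fun_prop) _ _)
        (Continuous.intervalIntegrable (by fun_prop) _ _)]
      simp
    simp_rw [this]
    rw [intervalIntegral.integral_sub (Continuous.intervalIntegrable (by fun_prop) _ _)
        (Continuous.intervalIntegrable (by fun_prop) _ _)]
    simp
  have e2 : ‖∫ z in (0:ℝ)..1, ∫ y in (0:ℝ)..1, (v (x + δ * (y - x)) - v (x + δ / 2 * (z - x)))‖ ^ 2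
      ≤ ∫ z in (0:ℝ)..1, ∫ y in (0:ℝ)..1, K z y := by
    have hc : Continuous fun z => ∫ y in (0:ℝ)..1, (v (x + δ * (y - x)) - v (x + δ / 2 * (z - x))) :=
      intervalIntegral.continuous_parametric_intervalIntegral_of_continuous'
        (by simp only [Function.uncurry_def]; fun_prop) 0 1
    have a := cs_aux (fun _ => 1) _ continuous_const (fun _ => one_pos) hc 0 1 one_pos
    simp only [one_smul, one_mul, intervalIntegral.integral_const, sub_zero, smul_eq_mul] at a
    refine a.trans ?_
    apply intervalIntegral.integral_mono_on zero_le_one (hc.norm.pow 2 |>.intervalIntegrable _ _)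
      (hKi.intervalIntegrable _ _)
    intro z _
    have b := cs_aux (fun _ => 1) (fun y => (v (x + δ * (y - x)) - v (x + δ / 2 * (z - x))))
      continuous_const (fun _ => one_pos) (by fun_prop) 0 1 one_pos
    simp only [one_smul, one_mul, intervalIntegral.integral_const, sub_zero, smul_eq_mul] at b
    exact b
  rw [e1]
  refine e2.trans ?_
  have hK0 : ∀ z y, 0 ≤ K z y := fun z y => sq_nonneg _
  have hI0 : ∀ z, 0 ≤ ∫ y in (0:ℝ)..1, K z y := fun z =>
    intervalIntegral.integral_nonneg zero_le_one fun y _ => hK0 z y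
  have e3 : ENNReal.ofReal (∫ z in (0:ℝ)..1, ∫ y in (0:ℝ)..1, K z y) =
      ∫⁻ z in I01, ∫⁻ y in I01, ENNReal.ofReal (K z y) := by
    have i1 : IntegrableOn (fun z => ∫ y in (0:ℝ)..1, K z y) I01 :=
      (hKi.integrableOn_Icc (a := 0) (b := 1)).mono_set Ico_subset_Icc_self
    rw [← int_I01, ofReal_integral_eq_lintegral_ofReal i1 (ae_of_all _ hI0)]
    congr 1; ext z
    have hKz : Continuous (K z) := by simp only [hK]; fun_prop
    have i2 : IntegrableOn (K z) I01 :=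
      (hKz.integrableOn_Icc (a := 0) (b := 1)).mono_set Ico_subset_Icc_self
    rw [← int_I01, ofReal_integral_eq_lintegral_ofReal i2 (ae_of_all _ (hK0 z))]
  have hmem : ∀ c, 0 < c → c ≤ 1 → ∀ z ∈ I01, x + c * (z - x) ∈ I01 := by
    rintro c hc hc1 z ⟨hz1, hz2⟩
    constructor
    · nlinarith
    · nlinarith
  set P : ℝ → ℝ → ℝ≥0∞ := fun a b => ENNReal.ofReal (‖v b - v a‖ ^ 2 / dT a b ^ (2 * σ + 1)) with hP
  have e4 : ∀ z ∈ I01, ∀ y ∈ I01, ENNReal.ofReal (K z y) ≤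
      ENNReal.ofReal (δ ^ (2 * σ + 1)) * P (x + δ / 2 * (z - x)) (x + δ * (y - x)) := by
    intro z hz y hy
    have ha := hmem (δ / 2) (by linarith) (by linarith) z hz
    have hb := hmem δ hδ hδ1 y hy
    rw [hP, ← ENNReal.ofReal_mul (by positivity)]
    apply ENNReal.ofReal_le_ofReal
    simp only [hK]
    by_cases hab : x + δ / 2 * (z - x) = x + δ * (y - x)
    · rw [hab]; simp
    have hd := dT_pos ha hb hab
    have hle : dT (x + δ / 2 * (z - x)) (x + δ * (y - x)) ≤ δ := by
      refine (dT_le _ _ 0).trans ?_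
      obtain ⟨hz1, hz2⟩ := hz
      obtain ⟨hy1, hy2⟩ := hy
      rw [abs_le]; push_cast
      constructor <;> nlinarith
    have : dT (x + δ / 2 * (z - x)) (x + δ * (y - x)) ^ (2 * σ + 1) ≤ δ ^ (2 * σ + 1) :=
      rpow_le_rpow hd.le hle (by linarith)
    have h0 := rpow_pos_of_pos hd (2 * σ + 1)
    rw [mul_div_assoc', le_div_iff₀ h0, mul_comm]
    gcongr
  have e5 : ∫⁻ z in I01, ∫⁻ y in I01, ENNReal.ofReal (K z y) ≤
      ENNReal.ofReal (δ ^ (2 * σ + 1)) * (ENNReal.ofReal (δ⁻¹) * (ENNReal.ofReal (δ / 2)⁻¹ *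
        gagliardoSqE σ v)) := by
    calc _ ≤ ∫⁻ z in I01, ∫⁻ y in I01, ENNReal.ofReal (δ ^ (2 * σ + 1)) *
            P (x + δ / 2 * (z - x)) (x + δ * (y - x)) :=
          setLIntegral_mono' measurableSet_Ico fun z hz =>
            setLIntegral_mono' measurableSet_Ico fun y hy => e4 z hz y hy
      _ ≤ ∫⁻ z in I01, ENNReal.ofReal (δ ^ (2 * σ + 1)) * (ENNReal.ofReal (δ⁻¹) *
            ∫⁻ y in I01, P (x + δ / 2 * (z - x)) y) := by
          apply lintegral_mono
          intro z
          simp only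
          rw [lintegral_const_mul' _ _ ENNReal.ofReal_ne_top]
          gcongr
          exact cv_aux x δ hx hδ hδ1 (P (x + δ / 2 * (z - x)))
      _ ≤ _ := by
          rw [lintegral_const_mul' _ _ ENNReal.ofReal_ne_top,
            lintegral_const_mul' _ _ ENNReal.ofReal_ne_top]
          gcongr
          exact cv_aux x (δ / 2) hx (by linarith) (by linarith) (fun a => ∫⁻ y in I01, P a y)
  rw [← e3, ← ENNReal.ofReal_toReal hG.ne, ← ENNReal.ofReal_mul (by positivity),
    ← ENNReal.ofReal_mul (by positivity), ← ENNReal.ofReal_mul (by positivity),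
    ENNReal.ofReal_le_ofReal_iff (by positivity)] at e5
  refine e5.trans (le_of_eq ?_)
  rw [show 2 * σ + 1 = (2 * σ - 1) + 1 + 1 by ring, rpow_add_one hδ.ne', rpow_add_one hδ.ne']
  field_simp

lemma morrey (n : ℕ) (σ : ℝ) (hσ : 1 / 2 < σ) : ∃ C : ℝ, 0 ≤ C ∧ ∀ v : ℝ → En n, Continuous v →
    gagliardoSqE σ v < ⊤ → ∀ x ∈ I01,
    ‖v x‖ ^ 2 ≤ C * ((∫ x in I01, ‖v x‖ ^ 2) + (gagliardoSqE σ v).toReal) := by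
  set q : ℝ := (1 / 2 : ℝ) ^ (σ - 1 / 2) with hq
  have hq0 : 0 < q := by positivity
  have hq1 : q < 1 := rpow_lt_one (by norm_num) (by norm_num) (by linarith)
  refine ⟨2 * (1 + 2 / (1 - q) ^ 2), by positivity, ?_⟩
  intro v hv hG x hx
  set G := (gagliardoSqE σ v).toReal with hGdef
  have hG0 : 0 ≤ G := ENNReal.toReal_nonneg
  set A : ℕ → En n := fun k => ∫ z in (0:ℝ)..1, v (x + (1/2 : ℝ) ^ k * (z - x)) with hA
  have hstep : ∀ k, dist (A k) (A (k + 1)) ≤ √(2 * G) * q ^ k := by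
    intro k
    have h := morrey_step σ hσ v hv hG x hx ((1/2 : ℝ) ^ k) (by positivity)
      (pow_le_one₀ (by norm_num) (by norm_num))
    have e : (1/2 : ℝ) ^ k / 2 = (1/2 : ℝ) ^ (k + 1) := by rw [pow_succ]; ring
    rw [e] at h
    have e' : ((1/2 : ℝ) ^ k) ^ (2 * σ - 1) = (q ^ k) ^ 2 := by
      rw [hq, ← rpow_natCast, ← rpow_natCast, ← rpow_natCast, ← rpow_mul (by positivity),
        ← rpow_mul (by positivity), ← rpow_mul (by positivity)]
      congr 1; push_cast; ring
    rw [e'] at h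
    rw [dist_eq_norm]
    apply abs_le_of_sq_le_sq' _ (by positivity) |>.2
    refine h.trans (le_of_eq ?_)
    rw [mul_pow, sq_sqrt (by positivity)]; ring
  have hlim : Tendsto A atTop (𝓝 (v x)) := by
    have hc : Continuous fun c : ℝ => ∫ z in (0:ℝ)..1, v (x + c * (z - x)) :=
      intervalIntegral.continuous_parametric_intervalIntegral_of_continuous'
        (by simp only [Function.uncurry_def]; fun_prop) 0 1
    have h0 := (hc.tendsto 0).comp
      (tendsto_pow_atTop_nhds_zero_of_lt_one (r := (1/2 : ℝ)) (by norm_num) (by norm_num))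
    simpa [Function.comp_def, hA] using h0
  have hd := dist_le_of_le_geometric_of_tendsto₀ q (√(2 * G)) hq1 hstep hlim
  have hA0 : ‖A 0‖ ^ 2 ≤ ∫ x in I01, ‖v x‖ ^ 2 := by
    have a := cs_aux (fun _ => 1) v continuous_const (fun _ => one_pos) hv 0 1 one_pos
    rw [int_I01]
    simpa [hA] using a
  rw [dist_eq_norm] at hd
  have h1 : ‖v x‖ ≤ ‖A 0‖ + √(2 * G) / (1 - q) := by
    have := norm_sub_norm_le (v x) (A 0)
    rw [norm_sub_rev] at this
    linarith
  have h2 : (√(2 * G) / (1 - q)) ^ 2 = 2 / (1 - q) ^ 2 * G := by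
    rw [div_pow, sq_sqrt (by positivity)]; ring
  have h3 : 0 ≤ 2 / (1 - q) ^ 2 := by positivity
  have h4 : 0 ≤ ∫ x in I01, ‖v x‖ ^ 2 := (sq_nonneg _).trans hA0
  have h5 : ‖v x‖ ^ 2 ≤ 2 * (‖A 0‖ ^ 2 + (√(2 * G) / (1 - q)) ^ 2) := by
    nlinarith [sq_nonneg (‖A 0‖ - √(2 * G) / (1 - q)), norm_nonneg (v x)]
  rw [h2] at h5
  nlinarith [mul_nonneg h3 h4]

lemma per_deriv {n : ℕ} {u : ℝ → En n} (h : Function.Periodic u 1) :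
    Function.Periodic (deriv u) 1 := by
  intro x
  have : (fun y => u (y + 1)) = u := funext h
  rw [← deriv_comp_add_const, this]

lemma per_bound {f : ℝ → ℝ} (hf : Continuous f) (hp : Function.Periodic f 1) :
    ∃ a b, ∀ x, f a ≤ f x ∧ f x ≤ f b := by
  obtain ⟨a, -, ha⟩ := isCompact_Icc.exists_isMinOn (s := Icc (0:ℝ) 1) ⟨0, by simp⟩ hf.continuousOn
  obtain ⟨b, -, hb⟩ := isCompact_Icc.exists_isMaxOn (s := Icc (0:ℝ) 1) ⟨0, by simp⟩ hf.continuousOn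
  refine ⟨a, b, fun x => ?_⟩
  obtain ⟨y, hy, hxy⟩ := hp.exists_mem_Ico₀ one_pos x
  rw [hxy]
  exact ⟨ha (Ico_subset_Icc_self hy), hb (Ico_subset_Icc_self hy)⟩

lemma lint_per (g : ℝ → ℝ≥0∞) (hg : Function.Periodic g 1) (t : ℝ) :
    ∫⁻ y in I01, g y = ∫⁻ y in Ioc t (t + 1), g y := by
  have h0 : ∫⁻ y in I01, g y = ∫⁻ y in Ioc (0:ℝ) (0 + 1), g y := by
    rw [I01, zero_add]
    exact setLIntegral_congr Ico_ae_eq_Ioc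
  rw [h0]
  exact IsAddFundamentalDomain.setLIntegral_eq (isAddFundamentalDomain_Ioc one_pos 0)
    (isAddFundamentalDomain_Ioc one_pos t) g hg.map_vadd_zmultiples

lemma arcDist_bdd {n : ℕ} (γ : ℝ → En n) (x y : ℝ) :
    BddBelow (range fun k : ℤ => |∫ t in x..(y + (k : ℝ)), ‖deriv γ t‖|) :=
  ⟨0, by rintro _ ⟨k, rfl⟩; exact abs_nonneg _⟩

lemma arcDist_nonneg {n : ℕ} (γ : ℝ → En n) (x y : ℝ) : 0 ≤ arcDist γ x y :=
  le_ciInf fun _ => abs_nonneg _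

lemma arcDist_le {n : ℕ} (γ : ℝ → En n) (x y : ℝ) (k : ℤ) :
    arcDist γ x y ≤ |∫ t in x..(y + (k : ℝ)), ‖deriv γ t‖| := ciInf_le (arcDist_bdd γ x y) k

lemma arcDist_per {n : ℕ} (γ : ℝ → En n) (x y : ℝ) : arcDist γ x (y + 1) = arcDist γ x y := by
  unfold arcDist
  rw [← (Equiv.addRight (1:ℤ)).iInf_comp (g := fun k : ℤ => |∫ t in x..(y + (k : ℝ)), ‖deriv γ t‖|)]
  congr 1; ext k
  simp only [Equiv.coe_addRight, Int.cast_add, Int.cast_one]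
  congr 2; ring

lemma cont_int {w : ℝ → ℝ} (hw : Continuous w) : Continuous fun z : ℝ × ℝ => ∫ t in z.1..z.2, w t := by
  have h : ∀ z : ℝ × ℝ, ∫ t in z.1..z.2, w t = (∫ t in (0:ℝ)..z.2, w t) - ∫ t in (0:ℝ)..z.1, w t := by
    intro z
    rw [intervalIntegral.integral_interval_sub_left] <;> exact hw.intervalIntegrable _ _
  simp_rw [h]
  have hc : Continuous (fun y => ∫ a in (0:ℝ)..y, w a) :=
    continuous_iff_continuousAt.2 fun y =>
      (hw.integral_hasStrictDerivAt 0 y |>.hasDerivAt).continuousAt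
  exact (hc.comp continuous_snd).sub (hc.comp continuous_fst)

lemma arcDist_meas {n : ℕ} (γ : ℝ → En n) (hw : Continuous (deriv γ)) :
    Measurable fun z : ℝ × ℝ => arcDist γ z.1 z.2 := by
  unfold arcDist
  refine Measurable.iInf fun k => ?_
  have : Continuous fun z : ℝ × ℝ => |∫ t in z.1..(z.2 + (k:ℝ)), ‖deriv γ t‖| :=
    ((cont_int hw.norm).comp (by fun_prop : Continuous fun z : ℝ × ℝ => (z.1, z.2 + (k:ℝ)))).abs
  exact this.measurable

lemma dT_meas : Measurable fun z : ℝ × ℝ => dT z.1 z.2 := by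
  unfold dT
  refine Measurable.iInf fun k => ?_
  exact Continuous.measurable (by fun_prop)

lemma arcDist_ge {n : ℕ} (γ : ℝ → En n) (hw : Continuous (deriv γ)) (c : ℝ) (hc : 0 ≤ c)
    (h : ∀ t, c ≤ ‖deriv γ t‖) (x y : ℝ) : c * dT x y ≤ arcDist γ x y := by
  have key : ∀ a b : ℝ, a ≤ b → c * (b - a) ≤ ∫ t in a..b, ‖deriv γ t‖ := by
    intro a b hab
    have := intervalIntegral.integral_mono_on (a := a) (b := b) (f := fun _ => c) hab
      ((continuous_const (y := c)).intervalIntegrable (μ := volume) a b) (hw.norm.intervalIntegrable _ _) (fun t _ => h t)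
    simpa [mul_comm] using this
  have key2 : ∀ a b : ℝ, c * |a - b| ≤ |∫ t in a..b, ‖deriv γ t‖| := by
    intro a b
    rcases le_total a b with hab | hab
    · rw [abs_of_nonpos (by linarith)]
      have := key a b hab
      exact (by linarith : c * -(a - b) ≤ _).trans (le_abs_self _)
    · rw [abs_of_nonneg (by linarith), intervalIntegral.integral_symm, abs_neg]
      exact (key b a hab).trans (le_abs_self _)
  refine le_ciInf fun k => ?_
  refine le_trans ?_ (key2 x (y + k))
  have := dT_le x y k
  rw [show x - (y + k) = x - y - k by ring]
  gcongr

lemma arcDist_le_dT {n : ℕ} (γ : ℝ → En n) (W : ℝ)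
    (h : ∀ t, ‖deriv γ t‖ ≤ W) (x y : ℝ) : arcDist γ x y ≤ W * dT x y := by
  rw [dT_eq]
  refine (arcDist_le γ x y (round (x - y))).trans ?_
  have := intervalIntegral.norm_integral_le_of_norm_le_const (a := x) (b := y + round (x - y))
    (f := fun t => ‖deriv γ t‖) (C := W) (fun t _ => by simpa using h t)
  rw [Real.norm_eq_abs] at this
  refine this.trans (le_of_eq ?_)
  rw [abs_sub_comm]; congr 2; ring

lemma midpoint_ex {n : ℕ} (γ : ℝ → En n) (hw : Continuous (deriv γ))
    (hper : Function.Periodic (deriv γ) 1) (x : ℝ) :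
    ∃ m, x ≤ m ∧ m - 1 ≤ x ∧ ∀ y ∈ Ioc (m - 1) m, arcDist γ x y = |∫ t in x..y, ‖deriv γ t‖| := by
  set w : ℝ → ℝ := fun t => ‖deriv γ t‖ with hwdef
  have hwc : Continuous w := hw.norm
  have hwp : Function.Periodic w 1 := fun t => by simp only [hwdef, hper t]
  have hi : ∀ a b, IntervalIntegrable w volume a b := fun a b => hwc.intervalIntegrable a b
  set L := ∫ t in x..(x + 1), w t with hL
  have hmono : ∀ a b, a ≤ b → 0 ≤ ∫ t in a..b, w t := fun a b hab =>
    intervalIntegral.integral_nonneg hab fun t _ => norm_nonneg _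
  have hL0 : 0 ≤ L := hmono _ _ (by linarith)
  have hrc : Continuous (fun y => ∫ a in x..y, w a) :=
    continuous_iff_continuousAt.2 fun y =>
      (hwc.integral_hasStrictDerivAt x y |>.hasDerivAt).continuousAt
  obtain ⟨m, hm, hmL⟩ := intermediate_value_Icc (by linarith : x ≤ x + 1) hrc.continuousOn
    (show L / 2 ∈ Icc (∫ a in x..x, w a) (∫ a in x..(x+1), w a) by
      rw [intervalIntegral.integral_same]; constructor <;> linarith)
  simp only at hmL
  refine ⟨m, hm.1, by linarith [hm.2], fun y hy => ?_⟩
  have hshift : ∀ k : ℤ, ∫ t in x..(y + k), w t = (∫ t in x..y, w t) + k * L := by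
    intro k
    rw [← intervalIntegral.integral_add_adjacent_intervals (hi x y) (hi y _)]
    have := hwp.intervalIntegral_add_zsmul_eq k y (fun a b => hi a b)
    simp only [zsmul_eq_mul, mul_one] at this
    rw [this, hL]
    congr 2
    exact hwp.intervalIntegral_add_eq y x
  have hL1 : ∫ t in (m-1)..m, w t = L := by
    have := hwp.intervalIntegral_add_eq (m-1) x
    rw [hL, ← this]; congr 1; ring
  have hle : |∫ t in x..y, w t| ≤ L / 2 := by
    rw [abs_le]
    have h1 := intervalIntegral.integral_add_adjacent_intervals (hi x y) (hi y m)
    have h2 := intervalIntegral.integral_add_adjacent_intervals (hi (m-1) y) (hi y m)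
    have h3 := hmono _ _ hy.1.le
    have h4 := hmono _ _ hy.2
    constructor <;> linarith
  apply le_antisymm
  · have := arcDist_le γ x y 0
    simpa using this
  · refine le_ciInf fun k => ?_
    change _ ≤ |∫ t in x..(y + k), w t|
    rw [hshift]
    set a := ∫ t in x..y, w t
    rcases eq_or_ne k 0 with rfl | hk
    · simp
    have hk1 : (1:ℝ) ≤ |(k:ℝ)| := by
      rw [← Int.cast_abs]; exact_mod_cast Int.one_le_abs hk
    have h5 : L ≤ |(k:ℝ) * L| := by
      rw [abs_mul, abs_of_nonneg hL0]; nlinarith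
    have h6 : |(k:ℝ) * L| ≤ |a + k * L| + |a| := by
      have := abs_sub (a + k * L) a
      simpa using this
    linarith

lemma distor_fin {n : ℕ} (s : ℝ) (γ : ℝ → En n) (hγ : InM s γ) : distorE γ < ⊤ := by
  obtain ⟨⟨hper, hC1, -⟩, hinj, hne⟩ := hγ
  have hd : Continuous (deriv γ) := hC1.continuous_deriv le_rfl
  have hdp := per_deriv hper
  obtain ⟨_, b, hb⟩ := per_bound hd.norm (fun t => by rw [hdp t])
  set W := ‖deriv γ b‖
  have hgc : Continuous fun z : ℝ × ℝ => ‖∫ θ in (0:ℝ)..1, deriv γ (z.1 + θ * z.2)‖ := by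
    apply Continuous.norm
    exact intervalIntegral.continuous_parametric_intervalIntegral_of_continuous'
      (f := fun (z : ℝ × ℝ) θ => deriv γ (z.1 + θ * z.2))
      (by simp only [Function.uncurry_def]; fun_prop) 0 1
  have hgeq : ∀ x h : ℝ, h • ∫ θ in (0:ℝ)..1, deriv γ (x + θ * h) = γ (x + h) - γ x := by
    intro x h
    have := intervalIntegral.smul_integral_comp_add_mul (a := 0) (b := 1) (deriv γ) h x
    simp_rw [mul_comm _ h, this]
    rw [intervalIntegral.integral_deriv_eq_sub]
    · simp
    · intro t _; exact (hC1.differentiable one_ne_zero).differentiableAt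
    · exact hd.intervalIntegrable _ _
  have hinj2 : ∀ x h : ℝ, |h| ≤ 1/2 → h ≠ 0 → γ (x + h) ≠ γ x := by
    intro x h hh h0 he
    have e1 : ∀ y : ℝ, γ (Int.fract y) = γ y := by
      intro y
      have := hper.sub_int_mul_eq (x := y) ⌊y⌋
      rwa [mul_one] at this
    rw [← e1 (x + h), ← e1 x] at he
    have := hinj ⟨Int.fract_nonneg _, Int.fract_lt_one _⟩ ⟨Int.fract_nonneg _, Int.fract_lt_one _⟩ he
    obtain ⟨k, hk⟩ := Int.fract_eq_fract.1 this
    have hk' : h = k := by linarith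
    rw [hk'] at hh h0
    have hk0 : k ≠ 0 := by exact_mod_cast h0
    have hk1 : (1:ℝ) ≤ |(k:ℝ)| := by
      rw [← Int.cast_abs]; exact_mod_cast Int.one_le_abs hk0
    linarith
  obtain ⟨z0, hz0, hmin⟩ := (isCompact_Icc.prod isCompact_Icc).exists_isMinOn
    (s := Icc (0:ℝ) 1 ×ˢ Icc (-(1/2):ℝ) (1/2)) ⟨(0,0), by simp⟩ hgc.continuousOn
  set c := ‖∫ θ in (0:ℝ)..1, deriv γ (z0.1 + θ * z0.2)‖ with hc
  have hc0 : 0 < c := by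
    rw [hc, norm_pos_iff]
    by_cases h : z0.2 = 0
    · simp [h, hne]
    · intro h0
      have := hgeq z0.1 z0.2
      rw [h0, smul_zero] at this
      refine hinj2 z0.1 z0.2 (abs_le.2 hz0.2) h ?_
      exact sub_eq_zero.1 this.symm
  have hlow : ∀ x ∈ I01, ∀ y, c * dT x y ≤ ‖γ y - γ x‖ := by
    intro x hx y
    set k := round (x - y)
    set h := y + k - x with hh
    have e1 : γ y = γ (x + h) := by
      have := hper.int_mul k y
      rw [hh, show x + (y + k - x) = y + k * 1 by ring]
      exact (this).symm
    have e2 : dT x y = |h| := by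
      rw [dT_eq, abs_sub_comm, hh]; congr 1; ring
    have e3 : |h| ≤ 1/2 := by
      rw [← e2, dT_eq]; exact abs_sub_round _
    have := hmin (show (x, h) ∈ _ from ⟨Ico_subset_Icc_self hx, abs_le.1 e3⟩)
    rw [e1, ← hgeq, norm_smul, e2, Real.norm_eq_abs, mul_comm]
    gcongr
    exact this
  refine lt_of_le_of_lt (b := ENNReal.ofReal (W / c)) ?_ ENNReal.ofReal_lt_top
  refine iSup_le fun x => iSup_le fun hx => iSup_le fun y => iSup_le fun hy => iSup_le fun hxy => ?_
  apply ENNReal.ofReal_le_ofReal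
  have h1 := arcDist_le_dT γ W (fun t => (hb t).2) x y
  have h2 := hlow x hx y
  have h3 := dT_pos hx hy hxy
  have h4 : 0 < ‖γ y - γ x‖ := lt_of_lt_of_le (by positivity) h2
  rw [div_le_div_iff₀ h4 hc0]
  have hW : 0 ≤ W := norm_nonneg _
  nlinarith

lemma pt_alg {E : Type*} [NormedAddCommGroup E] [InnerProductSpace ℝ E] (a b τ τ' : E) (M : ℝ)
    (ha : ‖a‖ ≤ M) (hb : ‖b‖ ≤ M) (h1 : ‖τ‖ = 1) (h2 : ‖τ'‖ = 1) :
    ‖a - (⟪τ, τ'⟫ : ℝ) • b‖ ^ 2 ≤ ‖a - b‖ ^ 2 + M ^ 2 * ‖τ' - τ‖ ^ 2 := by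
  set c : ℝ := ⟪τ, τ'⟫ with hc
  have hcabs := abs_real_inner_le_norm τ τ'
  rw [h1, h2, mul_one, abs_le, ← hc] at hcabs
  have hab := real_inner_le_norm a b
  rw [norm_sub_sq_real, norm_sub_sq_real, norm_sub_sq_real, h1, h2, real_inner_comm τ τ', ← hc,
    norm_smul, inner_smul_right, mul_pow, Real.norm_eq_abs, sq_abs]
  have h3 : (inner ℝ a b : ℝ) ≤ M ^ 2 :=
    hab.trans (by nlinarith [norm_nonneg a, norm_nonneg b])
  have h4 : 0 ≤ (1 - c) * (-2 * inner ℝ a b + (1 + c) * ‖b‖ ^ 2 + 2 * M ^ 2) := by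
    apply mul_nonneg (by linarith)
    have : 0 ≤ (1 + c) * ‖b‖ ^ 2 := mul_nonneg (by linarith) (sq_nonneg _)
    linarith
  nlinarith

lemma Dg_cont {n : ℕ} {γ u : ℝ → En n} (hγ : Continuous (deriv γ)) (hu : Continuous (deriv u))
    (hne : ∀ x, deriv γ x ≠ 0) : Continuous (Dg γ u) := by
  unfold Dg
  exact (hγ.norm.inv₀ fun x => norm_ne_zero_iff.2 (hne x)).smul hu

lemma Dg_norm {n : ℕ} {γ : ℝ → En n} (hne : ∀ x, deriv γ x ≠ 0) (x : ℝ) : ‖Dg γ γ x‖ = 1 := by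
  unfold Dg
  rw [norm_smul, norm_inv, norm_norm, inv_mul_cancel₀ (norm_ne_zero_iff.2 (hne x))]

lemma num_int {n : ℕ} (γ u : ℝ → En n) (hγ : ContDiff ℝ 1 γ) (hu : ContDiff ℝ 1 u)
    (hne : ∀ x, deriv γ x ≠ 0) (x y : ℝ) :
    u y - u x - DDg γ u x (γ y - γ x) =
      ∫ t in x..y, ‖deriv γ t‖ • (Dg γ u t - (⟪Dg γ γ x, Dg γ γ t⟫ : ℝ) • Dg γ u x) := by
  have hγd := hγ.continuous_deriv le_rfl
  have hud := hu.continuous_deriv le_rfl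
  have hD1 := Dg_cont hγd hud hne
  have hD2 := Dg_cont hγd hγd hne
  have hder : ∀ t, HasDerivAt (fun y => u y - u x - DDg γ u x (γ y - γ x))
      (‖deriv γ t‖ • (Dg γ u t - (⟪Dg γ γ x, Dg γ γ t⟫ : ℝ) • Dg γ u x)) t := by
    intro t
    have h1 := ((hu.differentiable one_ne_zero).differentiableAt (x := t)).hasDerivAt
    have h2 := ((hγ.differentiable one_ne_zero).differentiableAt (x := t)).hasDerivAt
    have h3 := ((hasDerivAt_const t (deriv γ x)).inner ℝ (h2.sub_const (γ x)))
    have h4 := (h3.const_mul ((‖deriv γ x‖ ^ 2)⁻¹)).smul_const (deriv u x)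
    have h5 := (h1.sub_const (u x)).sub h4
    refine h5.congr_deriv ?_
    have n1 := norm_ne_zero_iff.2 (hne t)
    have n2 := norm_ne_zero_iff.2 (hne x)
    simp only [Dg, inner_zero_left, add_zero, smul_sub, smul_smul, inner_smul_left,
      inner_smul_right, RCLike.conj_to_real]
    rw [mul_inv_cancel₀ n1, one_smul]
    congr 2
    field_simp
  rw [intervalIntegral.integral_eq_sub_of_hasDerivAt (fun t _ => hder t)]
  · simp [DDg]
  · apply Continuous.intervalIntegrable
    have := hγd.norm
    fun_prop

lemma num_bound {n : ℕ} (γ u : ℝ → En n) (hγ : ContDiff ℝ 1 γ) (hu : ContDiff ℝ 1 u)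
    (hne : ∀ x, deriv γ x ≠ 0) (M : ℝ) (hM : ∀ t, ‖Dg γ u t‖ ≤ M) (x y : ℝ) :
    ‖u y - u x - DDg γ u x (γ y - γ x)‖ ^ 2 ≤ |∫ t in x..y, ‖deriv γ t‖| *
      |∫ t in x..y, ‖deriv γ t‖ *
        (‖Dg γ u t - Dg γ u x‖ ^ 2 + M ^ 2 * ‖Dg γ γ t - Dg γ γ x‖ ^ 2)| := by
  have hγd := hγ.continuous_deriv le_rfl
  have hud := hu.continuous_deriv le_rfl
  have hD1 := Dg_cont hγd hud hne
  have hD2 := Dg_cont hγd hγd hne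
  rw [num_int γ u hγ hu hne]
  refine (cs_abs (fun t => ‖deriv γ t‖) _ hγd.norm (fun t => norm_pos_iff.2 (hne t))
    (by fun_prop) x y).trans ?_
  refine mul_le_mul_of_nonneg_left ?_ (abs_nonneg _)
  have hmono : ∀ a b : ℝ, a ≤ b →
      |∫ t in a..b, ‖deriv γ t‖ * ‖Dg γ u t - (⟪Dg γ γ x, Dg γ γ t⟫ : ℝ) • Dg γ u x‖ ^ 2| ≤
      |∫ t in a..b, ‖deriv γ t‖ *
        (‖Dg γ u t - Dg γ u x‖ ^ 2 + M ^ 2 * ‖Dg γ γ t - Dg γ γ x‖ ^ 2)| := by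
    intro a b hab
    rw [abs_of_nonneg (intervalIntegral.integral_nonneg hab fun t _ => by positivity),
      abs_of_nonneg (intervalIntegral.integral_nonneg hab fun t _ => by positivity)]
    have := hγd.norm
    apply intervalIntegral.integral_mono_on hab
      (Continuous.intervalIntegrable (by fun_prop) _ _)
      (Continuous.intervalIntegrable (by fun_prop) _ _)
    intro t _
    gcongr
    exact pt_alg _ _ _ _ M (hM t) (hM x) (Dg_norm hne x) (Dg_norm hne t)
  rcases le_total x y with h | h
  · exact hmono x y h
  · rw [intervalIntegral.integral_symm, abs_neg, intervalIntegral.integral_symm y x, abs_neg]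
    exact hmono y x h

lemma distor_le {n : ℕ} (γ : ℝ → En n) (hfin : distorE γ < ⊤) {x y : ℝ} (hx : x ∈ I01)
    (hy : y ∈ I01) (hxy : x ≠ y) : arcDist γ x y / ‖γ y - γ x‖ ≤ distor γ := by
  have h : ENNReal.ofReal (arcDist γ x y / ‖γ y - γ x‖) ≤ distorE γ :=
    le_iSup_of_le x (le_iSup_of_le hx (le_iSup_of_le y (le_iSup_of_le hy (le_iSup_of_le hxy le_rfl))))
  exact (ENNReal.ofReal_le_iff_le_toReal hfin.ne).1 h

lemma slice {n : ℕ} (s : ℝ) (hs : 1 < s) (γ u : ℝ → En n) (hγ : InM s γ) (hu : InHs s u)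
    (M : ℝ) (hM : ∀ t, ‖Dg γ u t‖ ≤ M) (x : ℝ) (hx : x ∈ I01) :
    ∫⁻ y in I01, ENNReal.ofReal (‖Rop s γ u x y‖ ^ 2 * nuW γ x y) ≤
      ENNReal.ofReal (distor γ ^ (2 * s)) * (ENNReal.ofReal (1 / (2 * s - 1)) *
        ∫⁻ y in I01, ENNReal.ofReal ((‖Dg γ u y - Dg γ u x‖ ^ 2 +
          M ^ 2 * ‖Dg γ γ y - Dg γ γ x‖ ^ 2) / arcDist γ x y ^ (2 * (s - 1)) * nuW γ x y)) := by
  have hfin := distor_fin s γ hγ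
  obtain ⟨⟨hper, hC1, -⟩, hinj, hne⟩ := hγ
  obtain ⟨huper, huC1, -⟩ := hu
  have hγd := hC1.continuous_deriv le_rfl
  have hud := huC1.continuous_deriv le_rfl
  have hD1 := Dg_cont hγd hud hne
  have hD2 := Dg_cont hγd hγd hne
  have hdp := per_deriv hper
  have hudp := per_deriv huper
  have hpos : ∀ t, 0 < ‖deriv γ t‖ := fun t => norm_pos_iff.2 (hne t)
  obtain ⟨c, _, hc⟩ := per_bound hγd.norm (fun t => by rw [hdp t])
  have hdpos : ∀ y ∈ I01, x ≠ y → 0 < arcDist γ x y := fun y hy hxy =>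
    lt_of_lt_of_le (mul_pos (hpos c) (dT_pos hx hy hxy))
      (arcDist_ge γ hγd _ (hpos c).le (fun t => (hc t).1) x y)
  set K : ℝ → ℝ := fun y => ‖u y - u x - DDg γ u x (γ y - γ x)‖ ^ 2 / arcDist γ x y ^ (2 * s) *
    nuW γ x y with hK
  set F : ℝ → ℝ := fun y => ‖Dg γ u y - Dg γ u x‖ ^ 2 + M ^ 2 * ‖Dg γ γ y - Dg γ γ x‖ ^ 2 with hF
  have hFc : Continuous F := by simp only [hF]; fun_prop
  have hF0 : ∀ t, 0 ≤ F t := fun t => by simp only [hF]; positivity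
  have hD0 : 0 ≤ distor γ := ENNReal.toReal_nonneg
  have hnu : ∀ y, 0 ≤ nuW γ x y := fun y =>
    div_nonneg (by positivity) (arcDist_nonneg γ x y)
  -- step A
  have stepA : ∀ y ∈ I01, ENNReal.ofReal (‖Rop s γ u x y‖ ^ 2 * nuW γ x y) ≤
      ENNReal.ofReal (distor γ ^ (2 * s)) * ENNReal.ofReal (K y) := by
    intro y hy
    rw [← ENNReal.ofReal_mul (by positivity)]
    apply ENNReal.ofReal_le_ofReal
    simp only [hK]
    rw [← mul_assoc]
    refine mul_le_mul_of_nonneg_right ?_ (hnu y)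
    by_cases hxy : x = y
    · subst hxy; simp [Rop, DDg]
    have hd := hdpos y hy hxy
    have hΔ : 0 < ‖γ y - γ x‖ := by
      rw [norm_pos_iff, sub_ne_zero]
      exact fun h => hxy (hinj hx hy h.symm)
    have hle := distor_le γ hfin hx hy hxy
    rw [div_le_iff₀ hΔ] at hle
    have h1 : arcDist γ x y ^ (2 * s) ≤ distor γ ^ (2 * s) * ‖γ y - γ x‖ ^ (2 * s) := by
      rw [← mul_rpow hD0 hΔ.le]
      exact rpow_le_rpow hd.le hle (by linarith)
    have h2 : (‖γ y - γ x‖ ^ s) ^ 2 = ‖γ y - γ x‖ ^ (2 * s) := by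
      rw [← rpow_natCast, ← rpow_mul hΔ.le]; congr 1; push_cast; ring
    rw [Rop, norm_smul, mul_pow, norm_inv, inv_pow, Real.norm_eq_abs, sq_abs, h2, mul_div_assoc',
      inv_mul_eq_div, div_le_div_iff₀ (rpow_pos_of_pos hΔ _) (rpow_pos_of_pos hd _)]
    nlinarith [sq_nonneg ‖u y - u x - DDg γ u x (γ y - γ x)‖]
  have hKper : Function.Periodic (fun y => ENNReal.ofReal (K y)) 1 := by
    intro y
    simp only [hK, nuW, arcDist_per, hper y, huper y, hdp y]
  have hDper : ∀ v : ℝ → En n, Function.Periodic (deriv v) 1 → Function.Periodic (Dg γ v) 1 := by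
    intro v hv y
    simp only [Dg, hdp y, hv y]
  have hHper : Function.Periodic
      (fun y => ENNReal.ofReal (F y / arcDist γ x y ^ (2 * (s - 1)) * nuW γ x y)) 1 := by
    intro y
    simp only [hF, nuW, arcDist_per, hDper u hudp y, hDper γ hdp y, hdp y]
  obtain ⟨m, hm1, hm2, hm⟩ := midpoint_ex γ hγd hdp x
  have main : ∫⁻ y in I01, ENNReal.ofReal (K y) ≤ ENNReal.ofReal (1 / (2 * s - 1)) *
      ∫⁻ y in I01, ENNReal.ofReal (F y / arcDist γ x y ^ (2 * (s - 1)) * nuW γ x y) := by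
    rw [lint_per _ hKper (m - 1), lint_per _ hHper (m - 1), sub_add_cancel]
    have e1 : ∫⁻ y in Ioc (m-1) m, ENNReal.ofReal (K y) ≤ ENNReal.ofReal ‖deriv γ x‖ *
        ∫⁻ y in Ioc (m-1) m, ENNReal.ofReal (‖deriv γ y‖ * |∫ t in x..y, ‖deriv γ t‖ * F t| /
          |∫ t in x..y, ‖deriv γ t‖| ^ (2 * s)) := by
      rw [← lintegral_const_mul' _ _ ENNReal.ofReal_ne_top]
      apply setLIntegral_mono' measurableSet_Ioc
      intro y hy
      rw [← ENNReal.ofReal_mul (by positivity)]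
      apply ENNReal.ofReal_le_ofReal
      simp only [hK, nuW]
      rw [hm y hy]
      have hb := num_bound γ u hC1 huC1 hne M hM x y
      set d := |∫ t in x..y, ‖deriv γ t‖| with hd
      rcases (abs_nonneg (∫ t in x..y, ‖deriv γ t‖)).eq_or_lt with h0 | h0
      · rw [← hd] at h0
        rw [← h0]
        simp [zero_rpow (by linarith : 2 * s ≠ 0)]
      · rw [← hd] at h0
        have h1 := rpow_pos_of_pos h0 (2 * s)
        rw [div_mul_div_comm, mul_div_assoc', div_le_div_iff₀ (by positivity) h1]
        change ‖u y - u x - DDg γ u x (γ y - γ x)‖ ^ 2 ≤ d * |∫ t in x..y, ‖deriv γ t‖ * F t| at hb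
        calc _ ≤ (d * |∫ t in x..y, ‖deriv γ t‖ * F t|) * (‖deriv γ x‖ * ‖deriv γ y‖) * d ^ (2 * s) := by
              gcongr
          _ = _ := by ring
    have e2 : ∫⁻ y in Ioc (m-1) m, ENNReal.ofReal (F y / arcDist γ x y ^ (2 * (s - 1)) * nuW γ x y)
        = ENNReal.ofReal ‖deriv γ x‖ * ∫⁻ y in Ioc (m-1) m, ENNReal.ofReal (‖deriv γ y‖ * F y /
          |∫ t in x..y, ‖deriv γ t‖| ^ (2 * s - 1)) := by
      rw [← lintegral_const_mul' _ _ ENNReal.ofReal_ne_top]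
      apply setLIntegral_congr_fun measurableSet_Ioc
      intro y hy
      simp only
      rw [← ENNReal.ofReal_mul (by positivity)]
      congr 1
      simp only [nuW]
      rw [hm y hy, div_mul_div_comm, ← rpow_add_one' (abs_nonneg _) (by linarith),
        show 2 * (s - 1) + 1 = 2 * s - 1 by ring]
      ring
    have e3 : ∫⁻ y in Ioc (m-1) m, ENNReal.ofReal (‖deriv γ y‖ * |∫ t in x..y, ‖deriv γ t‖ * F t| /
          |∫ t in x..y, ‖deriv γ t‖| ^ (2 * s)) ≤ ENNReal.ofReal (1 / (2 * s - 1)) *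
        ∫⁻ y in Ioc (m-1) m, ENNReal.ofReal (‖deriv γ y‖ * F y /
          |∫ t in x..y, ‖deriv γ t‖| ^ (2 * s - 1)) := by
      have hdisj : Disjoint (Ioc (m-1) x) (Ioc x m) := Ioc_disjoint_Ioc_of_le le_rfl
      rw [← Ioc_union_Ioc_eq_Ioc hm2 hm1, lintegral_union measurableSet_Ioc hdisj,
        lintegral_union measurableSet_Ioc hdisj, mul_add]
      exact add_le_add
        (hardy_left (fun t => ‖deriv γ t‖) F hγd.norm hpos hFc hF0 (2 * s) (by linarith) x (m-1))
        (hardy_right (fun t => ‖deriv γ t‖) F hγd.norm hpos hFc hF0 (2 * s) (by linarith) x m)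
    rw [e2]
    refine e1.trans ?_
    rw [mul_left_comm]
    gcongr
  calc _ ≤ ∫⁻ y in I01, ENNReal.ofReal (distor γ ^ (2 * s)) * ENNReal.ofReal (K y) :=
        setLIntegral_mono' measurableSet_Ico stepA
    _ = ENNReal.ofReal (distor γ ^ (2 * s)) * ∫⁻ y in I01, ENNReal.ofReal (K y) :=
        lintegral_const_mul' _ _ ENNReal.ofReal_ne_top
    _ ≤ _ := by gcongr


lemma Dg_diff {n : ℕ} (γ u : ℝ → En n) (c N : ℝ) (hc : 0 < c) (h : ∀ t, c ≤ ‖deriv γ t‖)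
    (hN : ∀ t, ‖deriv u t‖ ≤ N) (x y : ℝ) :
    ‖Dg γ u y - Dg γ u x‖ ^ 2 ≤ 2 * ((c⁻¹) ^ 2 + (c⁻¹) ^ 4) *
      (‖deriv u y - deriv u x‖ ^ 2 + N ^ 2 * ‖deriv γ y - deriv γ x‖ ^ 2) := by
  have hx := h x
  have hy := h y
  have hx0 : 0 < ‖deriv γ x‖ := hc.trans_le hx
  have hy0 : 0 < ‖deriv γ y‖ := hc.trans_le hy
  have hN0 : 0 ≤ N := (norm_nonneg _).trans (hN x)
  have e : Dg γ u y - Dg γ u x = ‖deriv γ y‖⁻¹ • (deriv u y - deriv u x) +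
      (‖deriv γ y‖⁻¹ - ‖deriv γ x‖⁻¹) • deriv u x := by
    simp only [Dg, smul_sub, sub_smul]; abel
  have iy : ‖deriv γ y‖⁻¹ ≤ c⁻¹ := inv_anti₀ hc hy
  have ix : ‖deriv γ x‖⁻¹ ≤ c⁻¹ := inv_anti₀ hc hx
  have h1 : |‖deriv γ y‖⁻¹ - ‖deriv γ x‖⁻¹| ≤ c⁻¹ * c⁻¹ * ‖deriv γ y - deriv γ x‖ := by
    have : ‖deriv γ y‖⁻¹ - ‖deriv γ x‖⁻¹ =
        ‖deriv γ y‖⁻¹ * ‖deriv γ x‖⁻¹ * (‖deriv γ x‖ - ‖deriv γ y‖) := by field_simp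
    rw [this, abs_mul, abs_of_nonneg (by positivity)]
    have h3 : |‖deriv γ x‖ - ‖deriv γ y‖| ≤ ‖deriv γ y - deriv γ x‖ := by
      rw [norm_sub_rev]; exact abs_norm_sub_norm_le _ _
    gcongr
  have h2 : ‖Dg γ u y - Dg γ u x‖ ≤ c⁻¹ * ‖deriv u y - deriv u x‖ +
      c⁻¹ * c⁻¹ * ‖deriv γ y - deriv γ x‖ * N := by
    rw [e]
    refine (norm_add_le _ _).trans ?_
    rw [norm_smul, norm_smul, norm_inv, norm_norm, Real.norm_eq_abs]
    gcongr
    exact hN x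
  set A := ‖deriv u y - deriv u x‖
  set B := ‖deriv γ y - deriv γ x‖
  calc _ ≤ (c⁻¹ * A + c⁻¹ * c⁻¹ * B * N) ^ 2 := by gcongr
    _ ≤ 2 * ((c⁻¹ * A) ^ 2 + (c⁻¹ * c⁻¹ * B * N) ^ 2) := add_sq_le
    _ ≤ _ := by
      have a1 : 0 ≤ (c⁻¹) ^ 4 * A ^ 2 := by positivity
      have a2 : 0 ≤ (c⁻¹) ^ 2 * (N ^ 2 * B ^ 2) := by positivity
      nlinarith

lemma gagliardo_meas {n : ℕ} (v : ℝ → En n) (hv : Continuous v) (e : ℝ) :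
    Measurable fun z : ℝ × ℝ => ENNReal.ofReal (‖v z.2 - v z.1‖ ^ 2 / dT z.1 z.2 ^ e) := by
  apply Measurable.ennreal_ofReal
  apply Measurable.div
  · exact Continuous.measurable (by fun_prop)
  · exact dT_meas.pow_const e

lemma lin_comb (f g : ℝ → ℝ → ℝ≥0∞) (hf : Measurable (Function.uncurry f)) (c d : ℝ≥0∞) (hc : c ≠ ⊤)
    (hd : d ≠ ⊤) : ∫⁻ x in I01, ∫⁻ y in I01, c * (f x y + d * g x y) =
      c * ((∫⁻ x in I01, ∫⁻ y in I01, f x y) + d * ∫⁻ x in I01, ∫⁻ y in I01, g x y) := by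
  have h1 : ∀ x, Measurable (f x) := fun x => hf.of_uncurry_left
  have h2 : Measurable fun x => ∫⁻ y in I01, f x y := hf.lintegral_prod_right'
  have e2 : ∀ x, ∫⁻ y in I01, c * (f x y + d * g x y) =
      c * ((∫⁻ y in I01, f x y) + d * ∫⁻ y in I01, g x y) := by
    intro x
    rw [lintegral_const_mul' _ _ hc, lintegral_add_left (h1 x), lintegral_const_mul' _ _ hd]
  rw [lintegral_congr e2, lintegral_const_mul' _ _ hc, lintegral_add_left h2,
    lintegral_const_mul' _ _ hd]

lemma gag_bound {n : ℕ} (s : ℝ) (hs : 1 < s) (γ : ℝ → En n) (hγ : InM s γ) :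
    ∃ C : ℝ, 0 ≤ C ∧ ∀ u : ℝ → En n, InHs s u → ∀ N : ℝ, (∀ t, ‖deriv u t‖ ≤ N) →
      gagGammaSqE s γ u ≤ ENNReal.ofReal C * (gagliardoSqE (s - 1) (deriv u) +
        ENNReal.ofReal (N ^ 2) * gagliardoSqE (s - 1) (deriv γ)) := by
  obtain ⟨⟨hper, hC1, -⟩, hinj, hne⟩ := hγ
  have hγd := hC1.continuous_deriv le_rfl
  have hdp := per_deriv hper
  obtain ⟨a, b, hab⟩ := per_bound hγd.norm (fun t => by rw [hdp t])
  have hc : 0 < ‖deriv γ a‖ := norm_pos_iff.2 (hne a)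
  have hW : 0 < ‖deriv γ b‖ := norm_pos_iff.2 (hne b)
  generalize ‖deriv γ a‖ = c at hab hc
  generalize ‖deriv γ b‖ = W at hab hW
  obtain ⟨C1, hC1def⟩ : ∃ C1, C1 = 2 * ((c⁻¹) ^ 2 + (c⁻¹) ^ 4) := ⟨_, rfl⟩
  have hC10 : 0 ≤ C1 := by rw [hC1def]; positivity
  obtain ⟨e, he⟩ : ∃ e, e = 2 * (s - 1) + 1 := ⟨_, rfl⟩
  have hce0 : 0 < c ^ e := rpow_pos_of_pos hc e
  have hCC : 0 ≤ C1 * (W * W) / c ^ e := by positivity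
  refine ⟨C1 * (W * W) / c ^ e, hCC, ?_⟩
  intro u hu N hN
  have hud := hu.2.1.continuous_deriv le_rfl
  obtain ⟨P, hP⟩ : ∃ P : (ℝ → En n) → ℝ → ℝ → ℝ, P = fun v x y => ‖v y - v x‖ ^ 2 / dT x y ^ e :=
    ⟨_, rfl⟩
  have hP0 : ∀ v x y, 0 ≤ P v x y := fun v x y => by
    rw [hP]; exact div_nonneg (sq_nonneg _) (rpow_nonneg (dT_nonneg _ _) _)
  have hpt : ∀ x ∈ I01, ∀ y ∈ I01,
      ENNReal.ofReal (‖Dg γ u y - Dg γ u x‖ ^ 2 / arcDist γ x y ^ (2 * (s - 1)) * nuW γ x y) ≤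
      ENNReal.ofReal (C1 * (W * W) / c ^ e) * (ENNReal.ofReal (P (deriv u) x y) +
        ENNReal.ofReal (N ^ 2) * ENNReal.ofReal (P (deriv γ) x y)) := by
    intro x hx y hy
    rw [← ENNReal.ofReal_mul (by positivity), ← ENNReal.ofReal_add (hP0 _ _ _)
      (mul_nonneg (by positivity) (hP0 _ _ _)), ← ENNReal.ofReal_mul hCC]
    apply ENNReal.ofReal_le_ofReal
    by_cases hxy : x = y
    · subst hxy; simp [hP]
    have hd := dT_pos hx hy hxy
    have hge := arcDist_ge γ hγd c hc.le (fun t => (hab t).1) x y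
    have hcd : 0 < c * dT x y := mul_pos hc hd
    have hpw : c ^ e * dT x y ^ e ≤ arcDist γ x y ^ e := by
      rw [← mul_rpow hc.le hd.le]
      exact rpow_le_rpow hcd.le hge (by rw [he]; linarith)
    have hde := rpow_pos_of_pos hd e
    have hce := rpow_pos_of_pos hc e
    have hDd := Dg_diff γ u c N hc (fun t => (hab t).1) hN x y
    rw [← hC1def] at hDd
    have hwx := (hab x).2
    have hwy := (hab y).2
    simp only [nuW, hP]
    rw [div_mul_div_comm, ← rpow_add_one' (arcDist_nonneg _ _ _) (by linarith), ← he]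
    calc _ ≤ (C1 * (‖deriv u y - deriv u x‖ ^ 2 + N ^ 2 * ‖deriv γ y - deriv γ x‖ ^ 2)) * (W * W) /
          (c ^ e * dT x y ^ e) := by gcongr
      _ = _ := by field_simp
  have hm : Measurable (Function.uncurry fun x y => ENNReal.ofReal (P (deriv u) x y)) := by
    rw [hP]; exact gagliardo_meas (deriv u) hud e
  have hg : ∀ v : ℝ → En n, gagliardoSqE (s - 1) v = ∫⁻ x in I01, ∫⁻ y in I01, ENNReal.ofReal (P v x y) := by
    intro v
    rw [hP, gagliardoSqE, he]
  rw [hg, hg, ← lin_comb (fun x y => ENNReal.ofReal (P (deriv u) x y))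
    (fun x y => ENNReal.ofReal (P (deriv γ) x y)) hm _ _ ENNReal.ofReal_ne_top ENNReal.ofReal_ne_top]
  rw [gagGammaSqE]
  exact setLIntegral_mono' measurableSet_Ico fun x hx =>
    setLIntegral_mono' measurableSet_Ico fun y hy => hpt x hx y hy

lemma gag_split {n : ℕ} (s : ℝ) (γ u : ℝ → En n) (hγ : InM s γ) (hu : InHs s u) (M : ℝ) :
    ∫⁻ x in I01, ∫⁻ y in I01, ENNReal.ofReal ((‖Dg γ u y - Dg γ u x‖ ^ 2 +
          M ^ 2 * ‖Dg γ γ y - Dg γ γ x‖ ^ 2) / arcDist γ x y ^ (2 * (s - 1)) * nuW γ x y) =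
      gagGammaSqE s γ u + ENNReal.ofReal (M ^ 2) * gagGammaSqE s γ γ := by
  obtain ⟨⟨hper, hC1, -⟩, hinj, hne⟩ := hγ
  have hγd := hC1.continuous_deriv le_rfl
  have hud := hu.2.1.continuous_deriv le_rfl
  have hD1 := Dg_cont hγd hud hne
  obtain ⟨Q, hQ⟩ : ∃ Q : (ℝ → En n) → ℝ → ℝ → ℝ, Q = fun v x y =>
    ‖Dg γ v y - Dg γ v x‖ ^ 2 / arcDist γ x y ^ (2 * (s - 1)) * nuW γ x y := ⟨_, rfl⟩
  have hQ0 : ∀ v x y, 0 ≤ Q v x y := fun v x y => by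
    have := arcDist_nonneg γ x y
    simp only [hQ, nuW]; positivity
  have hm : Measurable (Function.uncurry fun x y => ENNReal.ofReal (Q u x y)) := by
    simp only [hQ, nuW, Function.uncurry_def]
    apply Measurable.ennreal_ofReal
    have hA := arcDist_meas γ hγd
    apply Measurable.mul
    · apply Measurable.div
      · exact Continuous.measurable (by fun_prop)
      · exact hA.pow_const _
    · apply Measurable.div _ hA
      exact Continuous.measurable (by fun_prop)
  have e1 : ∀ x y, ENNReal.ofReal ((‖Dg γ u y - Dg γ u x‖ ^ 2 +
          M ^ 2 * ‖Dg γ γ y - Dg γ γ x‖ ^ 2) / arcDist γ x y ^ (2 * (s - 1)) * nuW γ x y) =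
      ENNReal.ofReal (Q u x y) + ENNReal.ofReal (M ^ 2) * ENNReal.ofReal (Q γ x y) := by
    intro x y
    rw [← ENNReal.ofReal_mul (by positivity), ← ENNReal.ofReal_add (hQ0 _ _ _)
      (mul_nonneg (by positivity) (hQ0 _ _ _))]
    congr 1
    simp only [hQ]; ring
  have hg : ∀ v : ℝ → En n, gagGammaSqE s γ v = ∫⁻ x in I01, ∫⁻ y in I01, ENNReal.ofReal (Q v x y) := by
    intro v
    rw [hQ, gagGammaSqE]
  have h := lin_comb (fun x y => ENNReal.ofReal (Q u x y))
    (fun x y => ENNReal.ofReal (Q γ x y)) hm 1 _ ENNReal.one_ne_top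
    (ENNReal.ofReal_ne_top (r := M ^ 2))
  simp only [one_mul] at h
  rw [hg, hg, ← h]
  exact lintegral_congr fun x => lintegral_congr fun y => e1 x y

lemma main_E {n : ℕ} (s : ℝ) (hs : 1 < s) (γ u : ℝ → En n) (hγ : InM s γ) (hu : InHs s u)
    (M : ℝ) (hM : ∀ t, ‖Dg γ u t‖ ≤ M) :
    RnuSqE s γ u ≤ ENNReal.ofReal (distor γ ^ (2 * s)) * (ENNReal.ofReal (1 / (2 * s - 1)) *
      (gagGammaSqE s γ u + ENNReal.ofReal (M ^ 2) * gagGammaSqE s γ γ)) := by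
  rw [← gag_split s γ u hγ hu M, ← lintegral_const_mul' _ _ ENNReal.ofReal_ne_top,
    ← lintegral_const_mul' _ _ ENNReal.ofReal_ne_top]
  exact setLIntegral_mono' measurableSet_Ico fun x hx => slice s hs γ u hγ hu M hM x hx

lemma main_R {n : ℕ} (s : ℝ) (hs : 1 < s) (γ u : ℝ → En n) (hγ : InM s γ) (hu : InHs s u)
    (M : ℝ) (hM : ∀ t, ‖Dg γ u t‖ ≤ M) (h1 : gagGammaSqE s γ u < ⊤) (h2 : gagGammaSqE s γ γ < ⊤) :
    RnuSq s γ u ≤ (1 / s) * distor γ ^ (2 * s) * (gagGammaSq s γ u + M ^ 2 * gagGammaSq s γ γ) := by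
  have h := main_E s hs γ u hγ hu M hM
  have hD0 : 0 ≤ distor γ := ENNReal.toReal_nonneg
  have hDp : 0 ≤ distor γ ^ (2 * s) := rpow_nonneg hD0 _
  have hs1 : 0 ≤ 1 / (2 * s - 1) := by apply one_div_nonneg.2; linarith
  rw [← ENNReal.ofReal_toReal h1.ne, ← ENNReal.ofReal_toReal h2.ne] at h
  change _ ≤ _ * (_ * (ENNReal.ofReal (gagGammaSq s γ u) + _ * ENNReal.ofReal (gagGammaSq s γ γ))) at h
  have g1 : 0 ≤ gagGammaSq s γ u := ENNReal.toReal_nonneg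
  have g2 : 0 ≤ gagGammaSq s γ γ := ENNReal.toReal_nonneg
  rw [← ENNReal.ofReal_mul (by positivity), ← ENNReal.ofReal_add g1 (by positivity),
    ← ENNReal.ofReal_mul hs1, ← ENNReal.ofReal_mul hDp] at h
  have h3 := ENNReal.toReal_le_of_le_ofReal (by positivity) h
  refine h3.trans ?_
  have h4 : 1 / (2 * s - 1) ≤ 1 / s := one_div_le_one_div_of_le (by linarith) (by linarith)
  rw [mul_comm (1 / s), mul_assoc]
  gcongr


/-- boundedness of `R^s_γ`: for `s ∈ (3/2,2)`, every `γ ∈ 𝓜` and every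
`u ∈ H^s(𝕋,ℝⁿ)` satisfy
`‖R^s_γ u‖²_{L²(ν_γ)} ≤ (1/s)·distor(γ)^{2s}·([u]²_{H^s(γ)} + ‖D_γu‖²_{L∞}·[γ]²_{H^s(γ)})`;
in particular `R^s_γ` is a bounded linear operator from `H^s` to `L²(ν_γ)`. -/
theorem statement5 (s : ℝ) (hs : s ∈ Set.Ioo (3 / 2 : ℝ) 2) (n : ℕ) (hn : 2 ≤ n)
    (γ : ℝ → En n) (hγ : InM s γ) :
    (∀ u : ℝ → En n, InHs s u →
      RnuSq s γ u ≤ (1 / s) * distor γ ^ (2 * s) *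
        (gagGammaSq s γ u + supNorm (Dg γ u) ^ 2 * gagGammaSq s γ γ)) ∧
    ∃ C : ℝ, 0 ≤ C ∧ ∀ u : ℝ → En n, InHs s u →
      Real.sqrt (RnuSq s γ u) ≤ C * HsNorm s u := by
  obtain ⟨hs1, hs2⟩ := hs
  have hs0 : 1 < s := by linarith
  have hγH := hγ.1
  have hne := hγ.2.2
  have hγd := hγH.2.1.continuous_deriv le_rfl
  have hdp := per_deriv hγH.1
  obtain ⟨Cg, hCg, hgag⟩ := gag_bound s hs0 γ hγ
  have hbd : ∀ u : ℝ → En n, InHs s u → ∃ b, ∀ t, ‖deriv u t‖ ≤ ‖deriv u b‖ := by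
    intro u hu
    obtain ⟨_, b, hb⟩ := per_bound (hu.2.1.continuous_deriv le_rfl).norm
      (fun t => by rw [per_deriv hu.1 t])
    exact ⟨b, fun t => (hb t).2⟩
  have hfin : ∀ u : ℝ → En n, InHs s u → gagGammaSqE s γ u < ⊤ := by
    intro u hu
    obtain ⟨b, hb⟩ := hbd u hu
    refine (hgag u hu _ hb).trans_lt ?_
    exact ENNReal.mul_lt_top ENNReal.ofReal_lt_top
      (ENNReal.add_lt_top.2 ⟨hu.2.2, ENNReal.mul_lt_top ENNReal.ofReal_lt_top hγH.2.2⟩)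
  obtain ⟨a, _, ha⟩ := per_bound hγd.norm (fun t => by rw [hdp t])
  set c := ‖deriv γ a‖ with hcdef
  have hc : 0 < c := norm_pos_iff.2 (hne a)
  have hDb : ∀ u : ℝ → En n, ∀ N, (∀ t, ‖deriv u t‖ ≤ N) → ∀ t, ‖Dg γ u t‖ ≤ c⁻¹ * N := by
    intro u N hN t
    rw [Dg, norm_smul, norm_inv, norm_norm]
    have := inv_anti₀ hc (ha t).1
    have h2 := hN t
    gcongr
  refine ⟨?_, ?_⟩
  · intro u hu
    refine main_R s hs0 γ u hγ hu _ (fun t => ?_) (hfin u hu) (hfin γ hγH)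
    obtain ⟨b, hb⟩ := hbd u hu
    exact le_ciSup (f := fun t => ‖Dg γ u t‖)
      ⟨_, by rintro _ ⟨t, rfl⟩; exact hDb u _ hb t⟩ t
  · obtain ⟨Cm, hCm, hmor⟩ := morrey n (s - 1) (by linarith)
    set Gγ := (gagliardoSqE (s - 1) (deriv γ)).toReal with hGγ
    have hGγ0 : 0 ≤ Gγ := ENNReal.toReal_nonneg
    have hD0 : 0 ≤ distor γ := ENNReal.toReal_nonneg
    have hg2 : 0 ≤ gagGammaSq s γ γ := ENNReal.toReal_nonneg
    set K := (1 / s) * distor γ ^ (2 * s) *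
      (Cg * (1 + Cm * Gγ) + (c⁻¹) ^ 2 * Cm * gagGammaSq s γ γ) with hK
    have hK0 : 0 ≤ K := by positivity
    refine ⟨√K, by positivity, fun u hu => ?_⟩
    rw [HsNorm, ← Real.sqrt_mul hK0]
    apply Real.sqrt_le_sqrt
    obtain ⟨b, hb⟩ := hbd u hu
    set N := ‖deriv u b‖ with hN
    have hud := hu.2.1.continuous_deriv le_rfl
    have hi1 : 0 ≤ ∫ x in I01, ‖u x‖ ^ 2 := integral_nonneg fun x => sq_nonneg _
    have hi2 : 0 ≤ ∫ x in I01, ‖deriv u x‖ ^ 2 := integral_nonneg fun x => sq_nonneg _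
    have hi3 : 0 ≤ (gagliardoSqE (s - 1) (deriv u)).toReal := ENNReal.toReal_nonneg
    have hH : 0 ≤ HsNormSq s u := add_nonneg (add_nonneg hi1 hi2) hi3
    have hG : (gagliardoSqE (s - 1) (deriv u)).toReal ≤ HsNormSq s u := by
      unfold HsNormSq; linarith
    have hN2 : N ^ 2 ≤ Cm * HsNormSq s u := by
      obtain ⟨y, hy, hby⟩ := (per_deriv hu.1).exists_mem_Ico₀ one_pos b
      rw [hN, hby]
      refine (hmor (deriv u) hud hu.2.2 y hy).trans ?_
      gcongr
      unfold HsNormSq; linarith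
    have hgu : gagGammaSq s γ u ≤ Cg * ((gagliardoSqE (s - 1) (deriv u)).toReal + N ^ 2 * Gγ) := by
      have h := hgag u hu N hb
      rw [← ENNReal.ofReal_toReal hu.2.2.ne, ← ENNReal.ofReal_toReal hγH.2.2.ne,
        ← ENNReal.ofReal_mul (by positivity), ← ENNReal.ofReal_add hi3 (by positivity),
        ← ENNReal.ofReal_mul hCg] at h
      exact ENNReal.toReal_le_of_le_ofReal (by positivity) h
    refine (main_R s hs0 γ u hγ hu _ (hDb u N hb) (hfin u hu) (hfin γ hγH)).trans ?_
    rw [hK, mul_assoc (1 / s * distor γ ^ (2 * s))]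
    refine mul_le_mul_of_nonneg_left ?_ (by positivity)
    calc gagGammaSq s γ u + (c⁻¹ * N) ^ 2 * gagGammaSq s γ γ
        ≤ Cg * (HsNormSq s u + (Cm * HsNormSq s u) * Gγ) +
          (c⁻¹) ^ 2 * (Cm * HsNormSq s u) * gagGammaSq s γ γ := by
          rw [mul_pow]
          refine add_le_add (hgu.trans ?_) ?_ <;> gcongr
      _ = _ := by ring
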